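/- For every graph G on n vertices and every threshold T ≥ 4(−λ_n)√n, the quantity S_T = ∑_{i : λ_i ≥ T} λ_i satisfies S_T² ≤ 2n · S_{T²/(4n)}. -/

import Mathlib

-- The adjacency matrix of a simple graph, over `ℝ`.
open scoped Classical in
noncomputable def adjMat {V : Type*} (G : SimpleGraph V) : Matrix V V ℝ :=
  Matrix.of fun i j => if G.Adj i j then (1 : ℝ) else 0

-- `S_T`, the sum of the eigenvalues that are at least `T`.
noncomputable def SSum {n : ℕ} (mu : Fin n → ℝ) (T : ℝ) : ℝ :=
  ∑ i ∈ Finset.univ.filter (fun i => T ≤ mu i), mu i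

/-!
Let `P` and `E` be the parts of the adjacency matrix `A` carried by the eigenvalues `≥ T` and
`≥ τ := T² / (4n)`, and let `κ ≥ -λₙ`. By the Schur product theorem `0 ≤ P ≤ A + κ` implies
`P ⊙ P ≤ (A + κ) ⊙ (A + κ)`, and the right-hand side is `A + κ²` because `A` is a `0`-`1` matrix
with zero diagonal. Since `A ≤ E + τ`, the Hadamard square `P ⊙ P` is at most `E + (τ + κ²)`. It has
rank at most `r²`, where `r` is the number of eigenvalues `≥ T`, so its trace is at most
`S_τ + (τ + κ²) r²`. By Cauchy–Schwarz on the diagonal, `S_T² = (tr P)² ≤ n tr (P ⊙ P)`. Finally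
`T r ≤ S_T` and `n (τ + κ²) ≤ T² / 2`, so the error term `n (τ + κ²) r²` is at most `S_T² / 2`.
-/

open Matrix

section Hadamard

theorem rank_hadamard_le {m n R : Type*} [Finite m] [Fintype n] [Field R] (A B : Matrix m n R) :
    (A ⊙ B).rank ≤ A.rank * B.rank := by
  simp only [rank_eq_finrank_span_cols]
  set M := Submodule.span R (Set.range A.col)
  set N := Submodule.span R (Set.range B.col)
  have span_le_mul : Submodule.span R (Set.range (A ⊙ B).col) ≤ M * N := by
    rw [Submodule.span_le]
    rintro _ ⟨j, rfl⟩
    exact Submodule.mul_mem_mul (Submodule.subset_span ⟨j, rfl⟩) (Submodule.subset_span ⟨j, rfl⟩)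
  calc Module.finrank R (Submodule.span R (Set.range (A ⊙ B).col))
      ≤ Module.finrank R ↥(M * N) := Submodule.finrank_mono span_le_mul
    _ = Module.finrank R (LinearMap.range (Submodule.mulMap M N)) := by
        rw [Submodule.mulMap_range]
    _ ≤ Module.finrank R (TensorProduct R M N) := LinearMap.finrank_range_le _
    _ = Module.finrank R M * Module.finrank R N := Module.finrank_tensorProduct

open scoped MatrixOrder ComplexOrder in
theorem hadamard_le_hadamard {n 𝕜 : Type*} [RCLike 𝕜] {A B C D : Matrix n n 𝕜}
    (hAB : A ≤ B) (hCD : C ≤ D) (hA : 0 ≤ A) (hD : 0 ≤ D) : A ⊙ C ≤ B ⊙ D := by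
  have decomposition : B ⊙ D - A ⊙ C = (B - A) ⊙ D + A ⊙ (D - C) := by
    ext i j
    simp only [Matrix.sub_apply, Matrix.add_apply, hadamard_apply]
    ring
  rw [le_iff, decomposition]
  exact (PosSemidef.hadamard hAB hD.posSemidef).add (PosSemidef.hadamard hA.posSemidef hCD)

theorem sq_trace_le_card_mul_trace_hadamard_self {n R : Type*} [Fintype n] [CommRing R]
    [LinearOrder R] [IsStrictOrderedRing R] (A : Matrix n n R) :
    A.trace ^ 2 ≤ Fintype.card n * (A ⊙ A).trace := by
  simpa only [trace, diag_apply, hadamard_apply, ← sq, Finset.card_univ] using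
    sq_sum_le_card_mul_sum_sq (s := Finset.univ) (f := A.diag)

theorem add_smul_one_hadamard_self {n R : Type*} [DecidableEq n] [CommSemiring R]
    {A : Matrix n n R} (hA : A.IsAdjMatrix) (κ : R) :
    (A + κ • 1) ⊙ (A + κ • 1) = A + κ ^ 2 • 1 := by
  have hA_one : A ⊙ 1 = 0 := hadamard_one_eq_zero_iff.mpr hA.diag_eq_zero
  have one_hA : 1 ⊙ A = 0 := one_hadamard_eq_zero_iff.mpr hA.diag_eq_zero
  have one_one : (1 : Matrix n n R) ⊙ 1 = 1 := hadamard_one_eq_one_iff.mpr diag_one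
  simp only [hadamard_add, add_hadamard, hadamard_smul, smul_hadamard, hA.hadamard_self,
    hA_one, one_hA, one_one, smul_zero, add_zero, zero_add, smul_smul, sq]

end Hadamard

section Trace

variable {n : Type*} [Fintype n] [DecidableEq n]

open scoped MatrixOrder

theorem eigenvalues_le_conj_diag_add {C E : Matrix n n ℝ} {σ : ℝ} (hC : C.IsHermitian)
    (hCE : C ≤ E + σ • 1) (k : n) : hC.eigenvalues k ≤
      (star (hC.eigenvectorUnitary : Matrix n n ℝ) * E * hC.eigenvectorUnitary) k k + σ := by
  set W : Matrix n n ℝ := (hC.eigenvectorUnitary : Matrix n n ℝ)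
  have star_mul_W : star W * W = 1 := Unitary.coe_star_mul_self hC.eigenvectorUnitary
  have conj_C : star W * C * W = diagonal hC.eigenvalues := by
    simpa [Unitary.conjStarAlgAut_apply] using hC.conjStarAlgAut_star_eigenvectorUnitary
  have conj_upper : star W * (E + σ • 1) * W = star W * E * W + σ • 1 := by
    rw [mul_add, add_mul, mul_smul_one, smul_mul_assoc, star_mul_W]
  have conj_le := star_left_conjugate_le_conjugate hCE W
  rw [conj_C, conj_upper] at conj_le
  simpa using (le_iff.mp conj_le).diag_nonneg (i := k)

theorem trace_le_trace_add_mul_rank {C E : Matrix n n ℝ} {σ : ℝ} (hE : 0 ≤ E)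
    (hCE : C ≤ E + σ • 1) : C.trace ≤ E.trace + σ * C.rank := by
  have hC : C.IsHermitian := by
    have upper : (E + σ • 1).IsHermitian :=
      hE.posSemidef.isHermitian.add (isHermitian_one.smul (.all σ))
    simpa only [sub_sub_cancel] using upper.sub (le_iff.mp hCE).isHermitian
  set W : Matrix n n ℝ := (hC.eigenvectorUnitary : Matrix n n ℝ)
  have W_mul_star : W * star W = 1 := Unitary.coe_mul_star_self hC.eigenvectorUnitary
  have diag_nonneg (k : n) : 0 ≤ (star W * E * W) k k :=
    (star_left_conjugate_nonneg hE W).posSemidef.diag_nonneg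
  have eigenvalue_le (k : n) : hC.eigenvalues k ≤
      (star W * E * W) k k + if hC.eigenvalues k ≠ 0 then σ else 0 := by
    split_ifs with hk
    · exact eigenvalues_le_conj_diag_add hC hCE k
    · simpa [not_not.mp hk] using diag_nonneg k
  calc C.trace = ∑ k, hC.eigenvalues k := hC.trace_eq_sum_eigenvalues
    _ ≤ ∑ k, ((star W * E * W) k k + if hC.eigenvalues k ≠ 0 then σ else 0) :=
        Finset.sum_le_sum fun k _ => eigenvalue_le k
    _ = (star W * E * W).trace + σ * C.rank := by
        rw [Finset.sum_add_distrib, ← Finset.sum_filter, Finset.sum_const, nsmul_eq_mul, mul_comm,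
          hC.rank_eq_card_non_zero_eigs, Fintype.card_subtype]
        rfl
    _ = E.trace + σ * C.rank := by rw [trace_mul_cycle, W_mul_star, one_mul]

theorem sq_trace_le_of_le_add_smul_one {A P E : Matrix n n ℝ} {κ τ : ℝ} (hA : A.IsAdjMatrix)
    (hP : 0 ≤ P) (hPA : P ≤ A + κ • 1) (hE : 0 ≤ E) (hAE : A ≤ E + τ • 1) (hτ : 0 ≤ τ) :
    P.trace ^ 2 ≤ Fintype.card n * (E.trace + (τ + κ ^ 2) * P.rank ^ 2) := by
  have hadamard_le : P ⊙ P ≤ E + (τ + κ ^ 2) • 1 :=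
    calc P ⊙ P ≤ (A + κ • 1) ⊙ (A + κ • 1) :=
          hadamard_le_hadamard hPA hPA hP (hP.trans hPA)
      _ = A + κ ^ 2 • 1 := add_smul_one_hadamard_self hA κ
      _ ≤ E + τ • 1 + κ ^ 2 • 1 := by gcongr
      _ = E + (τ + κ ^ 2) • 1 := by rw [add_assoc, add_smul]
  have rank_le : ((P ⊙ P).rank : ℝ) ≤ P.rank ^ 2 := by
    exact_mod_cast (rank_hadamard_le P P).trans_eq (sq _).symm
  calc P.trace ^ 2 ≤ Fintype.card n * (P ⊙ P).trace :=
        sq_trace_le_card_mul_trace_hadamard_self P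
    _ ≤ Fintype.card n * (E.trace + (τ + κ ^ 2) * (P ⊙ P).rank) := by
        gcongr
        exact trace_le_trace_add_mul_rank hE hadamard_le
    _ ≤ Fintype.card n * (E.trace + (τ + κ ^ 2) * P.rank ^ 2) := by gcongr

end Trace

section SpectralSum

variable {ι V : Type*} [Fintype ι] [DecidableEq ι]

/-- The matrix `∑ i, c i • v i (v i)ᵀ` with eigenvalues `c i` on the eigenvectors `v i`, when these
are orthonormal. It expresses the spectral decomposition of `A` and the parts of `A` cut out by a
range of eigenvalues. The vectors `v i` are the rows of `v`. -/
def spectralSum (v : Matrix ι V ℝ) (c : ι → ℝ) : Matrix V V ℝ :=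
  vᵀ * diagonal c * v

open scoped MatrixOrder in
theorem spectralSum_mono [Finite V] (v : Matrix ι V ℝ) : Monotone (spectralSum v) := by
  cases nonempty_fintype V
  intro c d hcd
  rw [le_iff, spectralSum, spectralSum, ← Matrix.sub_mul, ← Matrix.mul_sub, diagonal_sub,
    ← conjTranspose_eq_transpose_of_trivial]
  exact (PosSemidef.diagonal (sub_nonneg.mpr hcd)).conjTranspose_mul_mul_same v

theorem trace_spectralSum [Fintype V] {v : Matrix ι V ℝ} (hv : v * vᵀ = 1) (c : ι → ℝ) :
    (spectralSum v c).trace = ∑ i, c i := by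
  rw [spectralSum, trace_mul_cycle, hv, one_mul, trace_diagonal]

theorem rank_spectralSum_le [Fintype V] (v : Matrix ι V ℝ) (c : ι → ℝ) :
    (spectralSum v c).rank ≤ Fintype.card {i // c i ≠ 0} :=
  calc (spectralSum v c).rank ≤ (vᵀ * diagonal c).rank := rank_mul_le_left _ _
    _ ≤ (diagonal c).rank := rank_mul_le_right _ _
    _ = Fintype.card {i // c i ≠ 0} := rank_diagonal c

theorem spectralSum_add_const [DecidableEq V] {v : Matrix ι V ℝ} (hv : vᵀ * v = 1) (c : ι → ℝ)
    (a : ℝ) : spectralSum v (fun i => c i + a) = spectralSum v c + a • 1 := by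
  have diagonal_add_const : diagonal (fun i => c i + a) = diagonal c + a • 1 := by
    rw [smul_one_eq_diagonal, diagonal_add]
  simp only [spectralSum, diagonal_add_const, Matrix.mul_add, Matrix.add_mul, Matrix.mul_smul,
    Matrix.smul_mul, Matrix.mul_one, hv]

theorem spectralSum_eq_of_mulVec [Fintype V] [DecidableEq V] {v : Matrix ι V ℝ} (hv : vᵀ * v = 1)
    {A : Matrix V V ℝ} {μ : ι → ℝ} (heig : ∀ i, A *ᵥ v i = μ i • v i) : spectralSum v μ = A := by
  have eigen_matrix : A * vᵀ = vᵀ * diagonal μ := by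
    ext x i
    rw [mul_diagonal, mul_comm]
    exact congrFun (heig i) x
  rw [spectralSum, ← eigen_matrix, Matrix.mul_assoc, hv, Matrix.mul_one]

end SpectralSum

section Truncation

variable {ι : Type*}

/-- The eigenvalues `μ` with those below `T` replaced by `0`; the matrix with these eigenvalues is
the part of the original one carried by the eigenvalues that are at least `T`. -/
noncomputable def truncateBelow (T : ℝ) (μ : ι → ℝ) (i : ι) : ℝ :=
  if T ≤ μ i then μ i else 0

variable {T : ℝ} {μ : ι → ℝ}

theorem truncateBelow_nonneg (hT : 0 ≤ T) : 0 ≤ truncateBelow T μ := by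
  intro i
  simp only [truncateBelow, Pi.zero_apply]
  split_ifs with h <;> linarith

theorem truncateBelow_le_add {κ : ℝ} (hκ : 0 ≤ κ) (hμ : ∀ i, -κ ≤ μ i) :
    truncateBelow T μ ≤ fun i => μ i + κ := by
  intro i
  simp only [truncateBelow]
  split_ifs <;> linarith [hμ i]

theorem le_truncateBelow_add (hT : 0 ≤ T) : μ ≤ fun i => truncateBelow T μ i + T := by
  intro i
  simp only [truncateBelow]
  split_ifs <;> linarith

theorem sum_truncateBelow [Fintype ι] (T : ℝ) (μ : ι → ℝ) :
    ∑ i, truncateBelow T μ i = ∑ i with T ≤ μ i, μ i :=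
  (Finset.sum_filter _ _).symm

theorem mul_card_truncateBelow_ne_zero_le_sum [Fintype ι] :
    T * Fintype.card {i // truncateBelow T μ i ≠ 0} ≤ ∑ i, truncateBelow T μ i := by
  have le_of_ne_zero (i : ι) (hi : truncateBelow T μ i ≠ 0) : T ≤ truncateBelow T μ i := by
    simp only [truncateBelow] at hi ⊢
    split_ifs at hi ⊢ with h
    · exact h
    · exact absurd rfl hi
  calc T * Fintype.card {i // truncateBelow T μ i ≠ 0}
      = Finset.card {i | truncateBelow T μ i ≠ 0} • T := by
        rw [Fintype.card_subtype, nsmul_eq_mul, mul_comm]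
    _ ≤ ∑ i with truncateBelow T μ i ≠ 0, truncateBelow T μ i :=
        Finset.card_nsmul_le_sum _ _ _ fun i hi => le_of_ne_zero i (Finset.mem_filter.mp hi).2
    _ = ∑ i, truncateBelow T μ i := Finset.sum_filter_ne_zero _

end Truncation

section Eigenbasis

variable {V : Type*} [Fintype V] [DecidableEq V] {A : Matrix V V ℝ} {μ : V → ℝ} {v : Matrix V V ℝ}
  {κ : ℝ}

theorem nonneg_of_neg_le_eigenvalues [Nonempty V] (hA : A.trace = 0) (hv : v * vᵀ = 1)
    (heig : ∀ i, A *ᵥ v i = μ i • v i) (hκ : ∀ i, -κ ≤ μ i) : 0 ≤ κ := by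
  have sum_eigenvalues : ∑ i, μ i = 0 := by
    rw [← trace_spectralSum hv, spectralSum_eq_of_mulVec (mul_eq_one_comm.mp hv) heig, hA]
  obtain ⟨i, -, hi⟩ : ∃ i ∈ Finset.univ, μ i ≤ 0 :=
    Finset.exists_le_of_sum_le Finset.univ_nonempty (by simp [sum_eigenvalues])
  linarith [hκ i]

open scoped MatrixOrder in
theorem sq_sum_truncateBelow_le (hA : A.IsAdjMatrix) (hv : v * vᵀ = 1)
    (heig : ∀ i, A *ᵥ v i = μ i • v i) (hκ₀ : 0 ≤ κ) (hκ : ∀ i, -κ ≤ μ i) {T τ : ℝ} (hT : 0 ≤ T)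
    (hτ : 0 ≤ τ) :
    (∑ i, truncateBelow T μ i) ^ 2 ≤ Fintype.card V * (∑ i, truncateBelow τ μ i +
      (τ + κ ^ 2) * Fintype.card {i // truncateBelow T μ i ≠ 0} ^ 2) := by
  have hv' : vᵀ * v = 1 := mul_eq_one_comm.mp hv
  have spectralSum_eq : spectralSum v μ = A := spectralSum_eq_of_mulVec hv' heig
  have nonneg {t : ℝ} (ht : 0 ≤ t) : 0 ≤ spectralSum v (truncateBelow t μ) := by
    simpa [spectralSum] using spectralSum_mono v (truncateBelow_nonneg (μ := μ) ht)
  have le_shift : spectralSum v (truncateBelow T μ) ≤ A + κ • 1 := by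
    rw [← spectralSum_eq, ← spectralSum_add_const hv']
    exact spectralSum_mono v (truncateBelow_le_add hκ₀ hκ)
  have le_add_threshold : A ≤ spectralSum v (truncateBelow τ μ) + τ • 1 := by
    rw [← spectralSum_eq, ← spectralSum_add_const hv']
    exact spectralSum_mono v (le_truncateBelow_add hτ)
  have trace_bound :=
    sq_trace_le_of_le_add_smul_one hA (nonneg hT) le_shift (nonneg hτ) le_add_threshold hτ
  rw [trace_spectralSum hv, trace_spectralSum hv] at trace_bound
  refine trace_bound.trans ?_
  gcongr
  exact rank_spectralSum_le v _

end Eigenbasis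

theorem isAdjMatrix_adjMat {V : Type*} (G : SimpleGraph V) : (adjMat G).IsAdjMatrix := by
  classical
  have adjMat_eq : adjMat G = G.adjMatrix ℝ := by
    ext i j
    simp only [adjMat, of_apply, SimpleGraph.adjMatrix_apply]
  exact adjMat_eq ▸ G.isAdjMatrix_adjMatrix ℝ

theorem trace_adjMat {V : Type*} [Fintype V] (G : SimpleGraph V) : (adjMat G).trace = 0 := by
  simp only [trace, (isAdjMatrix_adjMat G).diag_eq_zero, Pi.zero_apply, Finset.sum_const_zero]

theorem of_mul_transpose_of_eq_one {ι V R : Type*} [DecidableEq ι] [Fintype V] [Semiring R]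
    {v : ι → V → R} (hv : ∀ i j, v i ⬝ᵥ v j = if i = j then 1 else 0) :
    of v * (of v)ᵀ = 1 := by
  ext i j
  exact (hv i j).trans one_apply.symm

theorem sq_le_two_mul_of_sq_le_add_error {N S S' T κ r : ℝ} (hN : 0 < N) (hTr : 0 ≤ T * r)
    (hrS : T * r ≤ S) (hκT : 4 * N * κ ^ 2 ≤ T ^ 2)
    (hS : S ^ 2 ≤ N * (S' + (T ^ 2 / (4 * N) + κ ^ 2) * r ^ 2)) : S ^ 2 ≤ 2 * N * S' := by
  have error_le : N * ((T ^ 2 / (4 * N) + κ ^ 2) * r ^ 2) ≤ S ^ 2 / 2 :=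
    calc N * ((T ^ 2 / (4 * N) + κ ^ 2) * r ^ 2)
        = (T ^ 2 / 4 + N * κ ^ 2) * r ^ 2 := by field_simp
      _ ≤ (T ^ 2 / 2) * r ^ 2 := by gcongr; linarith
      _ = (T * r) ^ 2 / 2 := by ring
      _ ≤ S ^ 2 / 2 := by gcongr
  linarith

theorem stmt4_general {V : Type*} [Fintype V] [DecidableEq V] (G : SimpleGraph V)
    (μ : V → ℝ) (v : V → V → ℝ)
    (heig : ∀ i, (adjMat G) *ᵥ v i = μ i • v i)
    (horth : ∀ i j, v i ⬝ᵥ v j = if i = j then 1 else 0)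
    {κ T : ℝ} (hκ : ∀ i, -κ ≤ μ i) (hT : 2 * κ * √(Fintype.card V) ≤ T) :
    (∑ i with T ≤ μ i, μ i) ^ 2 ≤
      2 * Fintype.card V * ∑ i with T ^ 2 / (4 * Fintype.card V) ≤ μ i, μ i := by
  cases isEmpty_or_nonempty V
  · simp
  have hv := of_mul_transpose_of_eq_one horth
  have hκ₀ : 0 ≤ κ := nonneg_of_neg_le_eigenvalues (trace_adjMat G) hv heig hκ
  have hT₀ : 0 ≤ T := le_trans (by positivity) hT
  have hκT : 4 * Fintype.card V * κ ^ 2 ≤ T ^ 2 :=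
    calc 4 * Fintype.card V * κ ^ 2 = (2 * κ * √(Fintype.card V)) ^ 2 := by
          rw [mul_pow, Real.sq_sqrt (Nat.cast_nonneg _)]; ring
      _ ≤ T ^ 2 := by gcongr
  simp only [← sum_truncateBelow]
  exact sq_le_two_mul_of_sq_le_add_error (Nat.cast_pos.mpr Fintype.card_pos) (by positivity)
    mul_card_truncateBelow_ne_zero_le_sum hκT
    (sq_sum_truncateBelow_le (isAdjMatrix_adjMat G) hv heig hκ₀ hκ hT₀ (by positivity))

-- The key recursion: for every graph `G` on `n` vertices and threshold
-- `T ≥ 4 (-λₙ) √n`, we have `S_T ^ 2 ≤ 2 n S_{T^2/(4n)}`.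
theorem stmt4 (n : ℕ) (hn : 0 < n) (G : SimpleGraph (Fin n))
    (μ : Fin n → ℝ) (v : Fin n → Fin n → ℝ)
    (hmono : Antitone μ)
    (heig : ∀ i, (adjMat G).mulVec (v i) = μ i • v i)
    (horth : ∀ i j : Fin n, (∑ k, v i k * v j k) = if i = j then (1 : ℝ) else 0)
    (T : ℝ) (hT : 4 * (-(μ ⟨n - 1, by omega⟩)) * Real.sqrt n ≤ T) :
    (SSum μ T) ^ 2 ≤ 2 * (n : ℝ) * SSum μ (T ^ 2 / (4 * (n : ℝ))) := by
  have : Nonempty (Fin n) := Fin.pos_iff_nonempty.mp hn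
  have neg_le_eigenvalue (i : Fin n) : -(-μ ⟨n - 1, by omega⟩) ≤ μ i :=
    (neg_neg _).trans_le (hmono (Fin.le_def.mpr (Nat.le_pred_of_lt i.2)))
  have hκ₀ : 0 ≤ -μ ⟨n - 1, by omega⟩ := nonneg_of_neg_le_eigenvalues (trace_adjMat G)
    (of_mul_transpose_of_eq_one horth) heig neg_le_eigenvalue
  have hT' : 2 * -μ ⟨n - 1, by omega⟩ * √(Fintype.card (Fin n)) ≤ T := by
    rw [Fintype.card_fin]
    exact le_trans (by gcongr; norm_num) hT
  simpa only [SSum, Fintype.card_fin] using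
    stmt4_general G μ v heig horth neg_le_eigenvalue hT'
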